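/- Let d ≥ 1 and let m ≥ 2 be an integer. There exists a constant C > 0 (depending only on d and m) such that for all smooth compactly supported functions f, g : ℝ^d → ℝ, Σ_{|α|≤m} ‖D^α(f g)‖_{L²(ℝ^d)} ≤ C ( ‖f‖_{L^∞} + ‖∇^m f‖_{L^∞} ) ‖g‖_{H^m}. -/

import Mathlib

/-!
The Leibniz rule writes `D^α (f g)` as a sum of at most `2^m` products `D^β f * D^γ g` with
`|β|, |γ| ≤ m`. Each product is at most `‖D^β f‖_∞ ‖D^γ g‖_{L²}` in `L²`, and
`‖D^γ g‖_{L²} ≤ ‖g‖_{H^m}`, so it suffices to control the intermediate derivatives of `f` by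
`‖f‖_∞ + ‖∇^m f‖_∞`.

This is the Landau–Kolmogorov interpolation. Let `A k` be the supremum of all derivatives of order
`k` of `f`. The mean value theorem on a segment of length `ε` in the direction `eᵢ` gives
`A (k+1) ≤ (2/ε) A k + ε A (k+2)` (`derivSup_landau`). By induction on `k`, absorbing the
term in `A (k+1)` on the left, for every `ε` there is `C` with `A k ≤ ε A (k+1) + C A 0`
(`exists_absorb`), and induction on `m` gives `A k ≤ C (A 0 + A m)` for `k ≤ m`
(`exists_interpolation`).

Iterated derivatives are indexed by words `l : List (Fin d)` rather than multi-indices, so that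
the product rule can be iterated letter by letter; since partial derivatives of smooth
functions commute, the derivative along a word is the one for the multi-index counting its letters (`wderiv_eq_mderiv`).
-/

open MeasureTheory

/-- The partial derivative `∂ᵢ f` of a function `f : ℝᵈ → ℝ`. -/
noncomputable def pderiv' {d : ℕ} (i : Fin d) (f : EuclideanSpace ℝ (Fin d) → ℝ) :
    EuclideanSpace ℝ (Fin d) → ℝ :=
  fun x => fderiv ℝ f x (EuclideanSpace.single i 1)

/-- The multi-index derivative `D^α f` for a multi-index `α : Fin d → ℕ`. -/
noncomputable def mderiv {d : ℕ} (α : Fin d → ℕ) (f : EuclideanSpace ℝ (Fin d) → ℝ) :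
    EuclideanSpace ℝ (Fin d) → ℝ :=
  (List.finRange d).foldr (fun i g => (pderiv' i)^[α i] g) f

/-- The (nonhomogeneous) Sobolev norm `‖f‖_{H^m} = (∑_{|α| ≤ m} ‖D^α f‖_{L²}²)^{1/2}`.
Multi-indices of degree at most `m` are parametrized by functions `Fin d → Fin (m+1)`. -/
noncomputable def sobNorm {d : ℕ} (m : ℕ) (f : EuclideanSpace ℝ (Fin d) → ℝ) : ENNReal :=
  (∑ α ∈ Finset.univ.filter (fun α : Fin d → Fin (m + 1) => ∑ i, (α i : ℕ) ≤ m),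
      (eLpNorm (mderiv (fun i => (α i : ℕ)) f) 2 volume) ^ 2) ^ (1 / 2 : ℝ)

/-- `‖∇^k f‖_{L^∞} = max_{|α| = k} ‖D^α f‖_{L^∞}`. -/
noncomputable def gradSupNorm {d : ℕ} (k : ℕ) (f : EuclideanSpace ℝ (Fin d) → ℝ) : ENNReal :=
  (Finset.univ.filter (fun α : Fin d → Fin (k + 1) => ∑ i, (α i : ℕ) = k)).sup
    (fun α => eLpNorm (mderiv (fun i => (α i : ℕ)) f) ⊤ volume)

/-! ### Derivatives along words -/

/-- The iterated partial derivative along a word of coordinate indices; the last letter is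
differentiated first. -/
noncomputable def wderiv {d : ℕ} (l : List (Fin d)) (f : EuclideanSpace ℝ (Fin d) → ℝ) :
    EuclideanSpace ℝ (Fin d) → ℝ :=
  l.foldr pderiv' f

section Words

variable {d : ℕ} {f g : EuclideanSpace ℝ (Fin d) → ℝ}

lemma wderiv_cons (i : Fin d) (l : List (Fin d)) (f : EuclideanSpace ℝ (Fin d) → ℝ) :
    wderiv (i :: l) f = pderiv' i (wderiv l f) := rfl

lemma wderiv_append (l l' : List (Fin d)) (f : EuclideanSpace ℝ (Fin d) → ℝ) :
    wderiv (l ++ l') f = wderiv l (wderiv l' f) := by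
  simp [wderiv, List.foldr_append]

lemma contDiff_pderiv (hf : ContDiff ℝ (⊤ : ℕ∞) f) (i : Fin d) :
    ContDiff ℝ (⊤ : ℕ∞) (pderiv' i f) := by
  have h : ContDiff ℝ (⊤ : ℕ∞) (fderiv ℝ f) := hf.fderiv_right (by simp)
  exact h.clm_apply contDiff_const

lemma hasCompactSupport_pderiv (hf : HasCompactSupport f) (i : Fin d) :
    HasCompactSupport (pderiv' i f) :=
  hf.fderiv_apply ℝ _

lemma contDiff_wderiv (hf : ContDiff ℝ (⊤ : ℕ∞) f) (l : List (Fin d)) :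
    ContDiff ℝ (⊤ : ℕ∞) (wderiv l f) := by
  induction l with
  | nil => exact hf
  | cons i l ih => exact contDiff_pderiv ih i

lemma hasCompactSupport_wderiv (hf : HasCompactSupport f) (l : List (Fin d)) :
    HasCompactSupport (wderiv l f) := by
  induction l with
  | nil => exact hf
  | cons i l ih => exact hasCompactSupport_pderiv ih i

lemma differentiable_of_smooth (hf : ContDiff ℝ (⊤ : ℕ∞) f) : Differentiable ℝ f :=
  hf.differentiable (by simp)

lemma pderiv_add (hf : ContDiff ℝ (⊤ : ℕ∞) f) (hg : ContDiff ℝ (⊤ : ℕ∞) g) (i : Fin d) :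
    pderiv' i (f + g) = pderiv' i f + pderiv' i g := by
  funext x
  simp only [pderiv', Pi.add_apply]
  rw [fderiv_add (differentiable_of_smooth hf x) (differentiable_of_smooth hg x)]
  rfl

lemma pderiv_mul (hf : ContDiff ℝ (⊤ : ℕ∞) f) (hg : ContDiff ℝ (⊤ : ℕ∞) g) (i : Fin d) :
    pderiv' i (f * g) = pderiv' i f * g + f * pderiv' i g := by
  funext x
  simp only [pderiv', Pi.add_apply, Pi.mul_apply]
  rw [fderiv_mul (differentiable_of_smooth hf x) (differentiable_of_smooth hg x)]
  simp
  ring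

lemma wderiv_add (hf : ContDiff ℝ (⊤ : ℕ∞) f) (hg : ContDiff ℝ (⊤ : ℕ∞) g)
    (l : List (Fin d)) : wderiv l (f + g) = wderiv l f + wderiv l g := by
  induction l with
  | nil => rfl
  | cons i l ih =>
    rw [wderiv_cons, ih, pderiv_add (contDiff_wderiv hf l) (contDiff_wderiv hg l)]
    rfl

/-- Symmetry of second derivatives. -/
lemma pderiv_comm (hf : ContDiff ℝ (⊤ : ℕ∞) f) (i j : Fin d) :
    pderiv' i (pderiv' j f) = pderiv' j (pderiv' i f) := by
  funext x
  have h : Differentiable ℝ (fderiv ℝ f) :=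
    (hf.fderiv_right (m := (⊤ : ℕ∞)) (by simp)).differentiable (by simp)
  have key : ∀ v w : EuclideanSpace ℝ (Fin d),
      fderiv ℝ (fun y => fderiv ℝ f y v) x w = fderiv ℝ (fderiv ℝ f) x w v := by
    intro v w
    rw [fderiv_clm_apply (h x) (differentiableAt_const v)]
    simp
  have hs : IsSymmSndFDerivAt ℝ f x :=
    hf.contDiffAt.isSymmSndFDerivAt
      (by simpa using WithTop.coe_le_coe.2 (le_top : (2 : ℕ∞) ≤ ⊤))
  change fderiv ℝ (fun y => fderiv ℝ f y _) x _ = fderiv ℝ (fun y => fderiv ℝ f y _) x _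
  rw [key, key]
  exact hs _ _

lemma wderiv_perm (hf : ContDiff ℝ (⊤ : ℕ∞) f) {l l' : List (Fin d)} (h : l.Perm l') :
    wderiv l f = wderiv l' f := by
  induction h with
  | nil => rfl
  | cons i _ ih => rw [wderiv_cons, wderiv_cons, ih]
  | swap i j l =>
    simp only [wderiv_cons]
    exact pderiv_comm (contDiff_wderiv hf l) _ _
  | trans _ _ ih1 ih2 => exact ih1.trans ih2

/-- The nondecreasing word in which the letter `i` occurs `α i` times. -/
def multiWord (α : Fin d → ℕ) : List (Fin d) :=
  (List.finRange d).flatMap fun i => List.replicate (α i) i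

lemma mderiv_eq_wderiv (α : Fin d → ℕ) (f : EuclideanSpace ℝ (Fin d) → ℝ) :
    mderiv α f = wderiv (multiWord α) f := by
  have hrep : ∀ (i : Fin d) (n : ℕ) (u : EuclideanSpace ℝ (Fin d) → ℝ),
      (pderiv' i)^[n] u = wderiv (List.replicate n i) u := by
    intro i n u
    induction n with
    | zero => rfl
    | succ n ih => rw [Function.iterate_succ_apply', ih, List.replicate_succ, wderiv_cons]
  unfold mderiv multiWord
  induction List.finRange d with
  | nil => rfl
  | cons i L ih =>
    rw [List.foldr_cons, ih, List.flatMap_cons, wderiv_append, hrep]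

lemma count_multiWord (α : Fin d → ℕ) (i : Fin d) : (multiWord α).count i = α i := by
  simp only [multiWord, List.count_flatMap, Function.comp_def, List.count_replicate, beq_iff_eq]
  rw [← List.ofFn_eq_map, List.sum_ofFn]
  simp

lemma length_multiWord (α : Fin d → ℕ) : (multiWord α).length = ∑ i, α i := by
  rw [multiWord, List.length_flatMap]
  simp only [List.length_replicate]
  rw [← List.ofFn_eq_map, List.sum_ofFn]

/-- A derivative along a word only depends on how often each letter occurs. -/
lemma wderiv_eq_mderiv (hf : ContDiff ℝ (⊤ : ℕ∞) f) (l : List (Fin d)) :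
    wderiv l f = mderiv (fun i => l.count i) f := by
  rw [mderiv_eq_wderiv]
  exact wderiv_perm hf (List.perm_iff_count.2 fun i =>
    (count_multiWord (fun i => l.count i) i).symm)

lemma sum_count (l : List (Fin d)) : ∑ i, l.count i = l.length := by
  rw [← length_multiWord]
  exact (List.perm_iff_count.2 fun i => count_multiWord (fun i => l.count i) i).length_eq

/-- A word of length at most `m` has a multi-index among those enumerated by
`Fin d → Fin (m + 1)`. -/
lemma exists_multiindex (hf : ContDiff ℝ (⊤ : ℕ∞) f) {m : ℕ} (l : List (Fin d))
    (hl : l.length ≤ m) : ∃ α : Fin d → Fin (m + 1),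
      ∑ i, (α i : ℕ) = l.length ∧ wderiv l f = mderiv (fun i => (α i : ℕ)) f :=
  ⟨fun i => ⟨l.count i, by have := List.count_le_length (a := i) (l := l); omega⟩,
    sum_count l, wderiv_eq_mderiv hf l⟩

end Words

/-! ### Interpolation of sup norms -/

section Interpolation

variable {d : ℕ} {f : EuclideanSpace ℝ (Fin d) → ℝ}

/-- The supremum of all derivatives of order `k`, as a real number. It is meaningful when these
derivatives are bounded, in particular for smooth compactly supported functions. -/
noncomputable def derivSup (f : EuclideanSpace ℝ (Fin d) → ℝ) (k : ℕ) : ℝ :=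
  ⨆ p : List.Vector (Fin d) k × EuclideanSpace ℝ (Fin d), |wderiv p.1.1 f p.2|

lemma abs_wderiv_le_derivSup (hf : ContDiff ℝ (⊤ : ℕ∞) f) (hc : HasCompactSupport f) {k : ℕ}
    (l : List (Fin d)) (hl : l.length = k) (x : EuclideanSpace ℝ (Fin d)) :
    |wderiv l f x| ≤ derivSup f k := by
  have hb : ∀ w : List.Vector (Fin d) k, ∃ M, ∀ x, ‖wderiv w.1 f x‖ ≤ M := fun w =>
    (contDiff_wderiv hf w.1).continuous.bounded_above_of_compact_support
      (hasCompactSupport_wderiv hc w.1)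
  choose M hM using hb
  have hbdd : BddAbove (Set.range fun p : List.Vector (Fin d) k × EuclideanSpace ℝ (Fin d) =>
      |wderiv p.1.1 f p.2|) := by
    refine ⟨∑ w, |M w|, ?_⟩
    rintro _ ⟨⟨w, y⟩, rfl⟩
    exact ((hM w y).trans (le_abs_self _)).trans
      (Finset.single_le_sum (f := fun w => |M w|) (fun _ _ => abs_nonneg _) (Finset.mem_univ w))
  exact le_ciSup hbdd (⟨l, hl⟩, x)

lemma derivSup_nonneg (f : EuclideanSpace ℝ (Fin d) → ℝ) (k : ℕ) : 0 ≤ derivSup f k :=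
  Real.iSup_nonneg fun _ => abs_nonneg _

lemma derivSup_le {k : ℕ} {M : ℝ} (hM : 0 ≤ M)
    (h : ∀ l : List (Fin d), l.length = k → ∀ x, |wderiv l f x| ≤ M) : derivSup f k ≤ M :=
  Real.iSup_le (fun p => h p.1.1 p.1.2 p.2) hM

/-- Landau's inequality in one direction: compare the derivative at `x` with a difference quotient
of step `ε`. -/
lemma abs_pderiv_le {h : EuclideanSpace ℝ (Fin d) → ℝ} (hh : ContDiff ℝ (⊤ : ℕ∞) h) (i : Fin d)
    {M₀ M₂ ε : ℝ} (hε : 0 < ε) (h0 : ∀ x, |h x| ≤ M₀)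
    (h2 : ∀ x, |pderiv' i (pderiv' i h) x| ≤ M₂) (x : EuclideanSpace ℝ (Fin d)) :
    |pderiv' i h x| ≤ 2 / ε * M₀ + ε * M₂ := by
  set e : EuclideanSpace ℝ (Fin d) := EuclideanSpace.single i 1
  have hline : ∀ u : EuclideanSpace ℝ (Fin d) → ℝ, ContDiff ℝ (⊤ : ℕ∞) u → ∀ t : ℝ,
      HasDerivAt (fun t : ℝ => u (x + t • e)) (pderiv' i u (x + t • e)) t := by
    intro u hu t
    have h1 : HasDerivAt (fun t : ℝ => x + t • e) e t := by
      simpa using ((hasDerivAt_id t).smul_const e).const_add x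
    exact (differentiable_of_smooth hu (x + t • e)).hasFDerivAt.comp_hasDerivAt t h1
  have hd1 := hline h hh
  have hd2 := hline _ (contDiff_pderiv hh i)
  obtain ⟨ξ, hξ, hslope⟩ := exists_hasDerivAt_eq_slope (fun t : ℝ => h (x + t • e))
    (fun t => pderiv' i h (x + t • e)) hε (fun t _ => (hd1 t).continuousAt.continuousWithinAt)
    (fun t _ => hd1 t)
  obtain ⟨η, hη, hslope2⟩ := exists_hasDerivAt_eq_slope (fun t : ℝ => pderiv' i h (x + t • e))
    (fun t => pderiv' i (pderiv' i h) (x + t • e)) hξ.1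
    (fun t _ => (hd2 t).continuousAt.continuousWithinAt) (fun t _ => hd2 t)
  simp only [zero_smul, add_zero, sub_zero] at hslope hslope2
  have hξ0 : 0 < ξ := hξ.1
  rw [eq_div_iff hξ0.ne'] at hslope2
  have hM2 : 0 ≤ M₂ := (abs_nonneg _).trans (h2 x)
  have e1 : |pderiv' i h (x + ξ • e)| ≤ 2 / ε * M₀ := by
    rw [hslope, abs_div, abs_of_pos hε, div_mul_eq_mul_div]
    gcongr
    have := abs_sub (h (x + ε • e)) (h x)
    linarith [h0 (x + ε • e), h0 x]
  have e2 : |pderiv' i h (x + ξ • e) - pderiv' i h x| ≤ ε * M₂ := by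
    rw [← hslope2, abs_mul, abs_of_pos hξ0, mul_comm]
    exact mul_le_mul hξ.2.le (h2 _) (abs_nonneg _) hε.le
  have e3 := abs_sub_abs_le_abs_sub (pderiv' i h x) (pderiv' i h (x + ξ • e))
  rw [abs_sub_comm] at e3
  linarith

lemma derivSup_landau (hf : ContDiff ℝ (⊤ : ℕ∞) f) (hc : HasCompactSupport f) (k : ℕ) {ε : ℝ}
    (hε : 0 < ε) :
    derivSup f (k + 1) ≤ 2 / ε * derivSup f k + ε * derivSup f (k + 2) := by
  have n0 := derivSup_nonneg f k
  have n2 := derivSup_nonneg f (k + 2)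
  refine derivSup_le (by positivity) ?_
  rintro (_ | ⟨i, l⟩) hl x
  · simp at hl
  · have hl' : l.length = k := by simpa using hl
    exact abs_pderiv_le (contDiff_wderiv hf l) i hε
      (fun y => abs_wderiv_le_derivSup hf hc l hl' y)
      (fun y => abs_wderiv_le_derivSup hf hc (i :: i :: l) (by simp [hl']) y) x

/-- Any nonnegative sequence satisfying the Landau inequalities satisfies
`A k ≤ ε A (k+1) + C A 0`, with `C` independent of the sequence. -/
lemma exists_absorb (k : ℕ) : ∀ ε : ℝ, 0 < ε → ∃ C : ℝ, 0 < C ∧ ∀ A : ℕ → ℝ, (∀ j, 0 ≤ A j) →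
    (∀ j δ, 0 < δ → A (j + 1) ≤ 2 / δ * A j + δ * A (j + 2)) →
    A k ≤ ε * A (k + 1) + C * A 0 := by
  induction k with
  | zero =>
    intro ε hε
    refine ⟨1, one_pos, fun A hA _ => ?_⟩
    have := mul_nonneg hε.le (hA 1)
    simpa using this
  | succ k ih =>
    intro ε hε
    -- With Landau at step `ε / 2` and the induction hypothesis at `ε / 8`, the term in
    -- `A (k + 1)` on the right has coefficient `(4 / ε) * (ε / 8) = 1 / 2`.
    obtain ⟨C, hC, h⟩ := ih (ε / 8) (by positivity)
    refine ⟨8 / ε * C, by positivity, fun A hA hL => ?_⟩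
    have h1 := h A hA hL
    have h2 := hL k (ε / 2) (by positivity)
    have h3 : 2 / (ε / 2) * A k ≤ 2 / (ε / 2) * (ε / 8 * A (k + 1) + C * A 0) := by gcongr
    have h4 : 2 / (ε / 2) * (ε / 8 * A (k + 1) + C * A 0)
        = 1 / 2 * A (k + 1) + 1 / 2 * (8 / ε * C * A 0) := by field_simp; ring
    have h5 : A (k + 1 + 1) = A (k + 2) := rfl
    rw [h5]
    linarith

/-- Interpolation: the terms of index at most `m` are controlled by those of index `0` and `m`. -/
lemma exists_interpolation (m : ℕ) : ∃ C : ℝ, 0 < C ∧ ∀ A : ℕ → ℝ, (∀ j, 0 ≤ A j) →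
    (∀ j δ, 0 < δ → A (j + 1) ≤ 2 / δ * A j + δ * A (j + 2)) →
    ∀ k ≤ m, A k ≤ C * (A 0 + A m) := by
  induction m with
  | zero =>
    refine ⟨1, one_pos, fun A hA _ k hk => ?_⟩
    obtain rfl : k = 0 := by omega
    linarith [hA 0]
  | succ m ih =>
    obtain ⟨C, hC, h⟩ := ih
    obtain ⟨D, hD, h'⟩ := exists_absorb m 1 one_pos
    refine ⟨C * (1 + D) + C + 1, by positivity, fun A hA hL k hk => ?_⟩
    have a0 := hA 0
    have am := hA (m + 1)
    have b := h' A hA hL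
    rcases Nat.lt_or_ge m k with hlt | hle
    · obtain rfl : k = m + 1 := by omega
      have : 0 ≤ (C * (1 + D) + C) * (A 0 + A (m + 1)) + A 0 := by positivity
      nlinarith
    · have c : A k ≤ C * (A 0 + (1 * A (m + 1) + D * A 0)) := (h A hA hL k hle).trans (by gcongr)
      have : 0 ≤ C * A 0 + A 0 + (C * D + C + 1) * A (m + 1) := by positivity
      nlinarith

/-- A continuous function is bounded everywhere, not only almost everywhere, by its
`L^∞` norm: the set where the bound fails is open and null, hence empty. -/
lemma abs_le_toReal_eLpNorm_top {h : EuclideanSpace ℝ (Fin d) → ℝ} (hh : Continuous h)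
    (hfin : eLpNorm h ⊤ volume ≠ ⊤) (x : EuclideanSpace ℝ (Fin d)) :
    |h x| ≤ (eLpNorm h ⊤ volume).toReal := by
  have hae : ∀ᵐ y ∂(volume : Measure (EuclideanSpace ℝ (Fin d))),
      |h y| ≤ (eLpNorm h ⊤ volume).toReal := by
    filter_upwards [enorm_ae_le_eLpNormEssSup h volume] with y hy
    rw [← eLpNorm_exponent_top] at hy
    have := ENNReal.toReal_mono hfin hy
    simpa using this
  have hopen : IsOpen {y | ¬ |h y| ≤ (eLpNorm h ⊤ volume).toReal} := by
    simp only [not_le]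
    exact isOpen_lt continuous_const hh.abs
  have hempty := (hopen.measure_eq_zero_iff volume).1 (ae_iff.1 hae)
  by_contra hx
  have : x ∈ {y | ¬ |h y| ≤ (eLpNorm h ⊤ volume).toReal} := hx
  rw [hempty] at this
  exact this

lemma eLpNorm_ne_top_of_smooth (hf : ContDiff ℝ (⊤ : ℕ∞) f) (hc : HasCompactSupport f)
    (p : ENNReal) : eLpNorm f p volume ≠ ⊤ :=
  (hf.continuous.memLp_of_hasCompactSupport hc).eLpNorm_lt_top.ne

lemma gradSupNorm_ne_top (hf : ContDiff ℝ (⊤ : ℕ∞) f) (hc : HasCompactSupport f) (m : ℕ) :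
    gradSupNorm m f ≠ ⊤ := by
  refine ((Finset.sup_lt_iff ENNReal.zero_lt_top).2 fun α _ => ?_).ne
  rw [mderiv_eq_wderiv]
  exact (eLpNorm_ne_top_of_smooth (contDiff_wderiv hf _) (hasCompactSupport_wderiv hc _) _).lt_top

lemma derivSup_zero_le (hf : ContDiff ℝ (⊤ : ℕ∞) f) (hc : HasCompactSupport f) :
    derivSup f 0 ≤ (eLpNorm f ⊤ volume).toReal := by
  refine derivSup_le ENNReal.toReal_nonneg fun l hl x => ?_
  obtain rfl := List.length_eq_zero_iff.1 hl
  exact abs_le_toReal_eLpNorm_top hf.continuous (eLpNorm_ne_top_of_smooth hf hc _) x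

lemma derivSup_le_gradSupNorm (hf : ContDiff ℝ (⊤ : ℕ∞) f) (hc : HasCompactSupport f) (m : ℕ) :
    derivSup f m ≤ (gradSupNorm m f).toReal := by
  refine derivSup_le ENNReal.toReal_nonneg fun l hl x => ?_
  have hs := contDiff_wderiv hf l
  refine (abs_le_toReal_eLpNorm_top hs.continuous
    (eLpNorm_ne_top_of_smooth hs (hasCompactSupport_wderiv hc l) _) x).trans ?_
  refine ENNReal.toReal_mono (gradSupNorm_ne_top hf hc m) ?_
  obtain ⟨α, hα, hl'⟩ := exists_multiindex hf l hl.le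
  rw [hl']
  exact Finset.le_sup (f := fun α : Fin d → Fin (m + 1) =>
    eLpNorm (mderiv (fun i => (α i : ℕ)) f) ⊤ volume) (by simp [hα, hl])

end Interpolation

/-! ### The product rule in `L²` -/

section Product

variable {d : ℕ}

lemma eLpNorm_wderiv_le_sobNorm {g : EuclideanSpace ℝ (Fin d) → ℝ}
    (hg : ContDiff ℝ (⊤ : ℕ∞) g) {m : ℕ} (l : List (Fin d)) (hl : l.length ≤ m) :
    eLpNorm (wderiv l g) 2 volume ≤ sobNorm m g := by
  obtain ⟨α, hα, hl'⟩ := exists_multiindex hg l hl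
  rw [hl', sobNorm]
  have h1 : (eLpNorm (mderiv (fun i => (α i : ℕ)) g) 2 volume) ^ 2 ≤ _ :=
    Finset.single_le_sum (s := Finset.univ.filter
      (fun α : Fin d → Fin (m + 1) => ∑ i, (α i : ℕ) ≤ m))
      (f := fun α : Fin d → Fin (m + 1) =>
        (eLpNorm (mderiv (fun i => (α i : ℕ)) g) 2 volume) ^ 2)
      (fun _ _ => zero_le) (by simp [hα, hl])
  have h2 := ENNReal.rpow_le_rpow h1 (z := 1 / 2) (by norm_num)
  refine le_trans (le_of_eq ?_) h2
  rw [← ENNReal.rpow_natCast, ← ENNReal.rpow_mul]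
  norm_num

/-- The Leibniz rule as an estimate: differentiating a product along a word of length `n` produces
`2 ^ n` terms, each bounded in `L²` by `F * G`. -/
lemma eLpNorm_wderiv_mul_le {F : ℝ} {G : ENNReal} (l : List (Fin d)) :
    ∀ f g : EuclideanSpace ℝ (Fin d) → ℝ,
      ContDiff ℝ (⊤ : ℕ∞) f → ContDiff ℝ (⊤ : ℕ∞) g →
      (∀ a : List (Fin d), a.length ≤ l.length → ∀ x, |wderiv a f x| ≤ F) →
      (∀ b : List (Fin d), b.length ≤ l.length → eLpNorm (wderiv b g) 2 volume ≤ G) →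
      eLpNorm (wderiv l (f * g)) 2 volume ≤ 2 ^ l.length * (ENNReal.ofReal F * G) := by
  induction l using List.reverseRecOn with
  | nil =>
    intro f g hf hg hF hG
    have h0 : eLpNorm (f * g) 2 volume ≤ ENNReal.ofReal F * eLpNorm g 2 volume := by
      refine eLpNorm_le_mul_eLpNorm_of_ae_le_mul (Filter.Eventually.of_forall fun x => ?_) 2
      rw [Pi.mul_apply, norm_mul]
      exact mul_le_mul_of_nonneg_right (hF [] le_rfl x) (norm_nonneg _)
    have hG0 : eLpNorm g 2 volume ≤ G := hG [] le_rfl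
    change eLpNorm (f * g) 2 volume ≤ 2 ^ 0 * (ENNReal.ofReal F * G)
    rw [pow_zero, one_mul]
    exact h0.trans (by gcongr)
  | append_singleton l i ih =>
    intro f g hf hg hF hG
    have hf' := contDiff_pderiv hf i
    have hg' := contDiff_pderiv hg i
    have hlen : (l ++ [i]).length = l.length + 1 := by simp
    rw [hlen] at hF hG ⊢
    have h1 := ih (pderiv' i f) g hf' hg
      (fun a ha x => by
        have := hF (a ++ [i]) (by simpa using ha) x
        rwa [wderiv_append] at this)
      (fun b hb => hG b (by omega))
    have h2 := ih f (pderiv' i g) hf hg'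
      (fun a ha x => hF a (by omega) x)
      (fun b hb => by
        have := hG (b ++ [i]) (by simpa using hb)
        rwa [wderiv_append] at this)
    have hsplit : wderiv (l ++ [i]) (f * g)
        = wderiv l (pderiv' i f * g) + wderiv l (f * pderiv' i g) := by
      rw [wderiv_append, ← wderiv_add (f := pderiv' i f * g) (g := f * pderiv' i g)
        (hf'.mul hg) (hf.mul hg'), ← pderiv_mul hf hg]
      rfl
    rw [hsplit]
    refine (eLpNorm_add_le
      (contDiff_wderiv (hf'.mul hg) l).continuous.aestronglyMeasurable
      (contDiff_wderiv (hf.mul hg') l).continuous.aestronglyMeasurable (by norm_num)).trans ?_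
    refine (add_le_add h1 h2).trans (le_of_eq ?_)
    ring

end Product

/-! ### The estimate -/

/-- Product estimate: for `d ≥ 1` and `m ≥ 2`,
`∑_{|α|≤m} ‖D^α(f g)‖_{L²} ≤ C (‖f‖_{L^∞} + ‖∇^m f‖_{L^∞}) ‖g‖_{H^m}`. -/
theorem product_estimate_two (d : ℕ) (hd : 1 ≤ d) (m : ℕ) (hm : 2 ≤ m) :
    ∃ C : ℝ, 0 < C ∧ ∀ f g : EuclideanSpace ℝ (Fin d) → ℝ,
      ContDiff ℝ (⊤ : ℕ∞) f → HasCompactSupport f →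
      ContDiff ℝ (⊤ : ℕ∞) g → HasCompactSupport g →
      ∑ α ∈ Finset.univ.filter
          (fun α : Fin d → Fin (m + 1) => ∑ i, (α i : ℕ) ≤ m),
        eLpNorm (mderiv (fun i => (α i : ℕ)) (fun y => f y * g y)) 2 volume
      ≤ ENNReal.ofReal C * (eLpNorm f ⊤ volume + gradSupNorm m f) * sobNorm m g := by
  obtain ⟨C, hC, hint⟩ := exists_interpolation m
  set S := Finset.univ.filter (fun α : Fin d → Fin (m + 1) => ∑ i, (α i : ℕ) ≤ m)
  refine ⟨(S.card + 1) * 2 ^ m * C, by positivity, fun f g hf hfc hg _ => ?_⟩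
  set N := eLpNorm f ⊤ volume + gradSupNorm m f with hN
  have hf0 := eLpNorm_ne_top_of_smooth hf hfc ⊤
  have hfm := gradSupNorm_ne_top hf hfc m
  have hNfin : N ≠ ⊤ := ENNReal.add_ne_top.2 ⟨hf0, hfm⟩
  have hF : ∀ a : List (Fin d), a.length ≤ m → ∀ x, |wderiv a f x| ≤ C * N.toReal := by
    intro a ha x
    refine (abs_wderiv_le_derivSup hf hfc a rfl x).trans ?_
    refine (hint (derivSup f) (derivSup_nonneg f)
      (fun j δ hδ => derivSup_landau hf hfc j hδ) _ ha).trans ?_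
    rw [hN, ENNReal.toReal_add hf0 hfm]
    gcongr
    · exact derivSup_zero_le hf hfc
    · exact derivSup_le_gradSupNorm hf hfc m
  have hofN : ENNReal.ofReal (C * N.toReal) = ENNReal.ofReal C * N := by
    rw [ENNReal.ofReal_mul hC.le, ENNReal.ofReal_toReal hNfin]
  have hterm : ∀ α ∈ S, eLpNorm (mderiv (fun i => (α i : ℕ)) (fun y => f y * g y)) 2 volume
      ≤ 2 ^ m * (ENNReal.ofReal C * N * sobNorm m g) := by
    intro α hα
    have hlen : (multiWord fun i => (α i : ℕ)).length ≤ m := by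
      rw [length_multiWord]
      exact (Finset.mem_filter.1 hα).2
    rw [mderiv_eq_wderiv, ← hofN]
    refine (eLpNorm_wderiv_mul_le _ f g hf hg (fun a ha x => hF a (ha.trans hlen) x)
      (fun b hb => eLpNorm_wderiv_le_sobNorm hg b (hb.trans hlen))).trans ?_
    gcongr
    norm_num
  refine (Finset.sum_le_card_nsmul S _ _ hterm).trans ?_
  have hconst : ENNReal.ofReal ((S.card + 1) * 2 ^ m * C)
      = (S.card + 1) * 2 ^ m * ENNReal.ofReal C := by
    rw [ENNReal.ofReal_mul (by positivity), ENNReal.ofReal_mul (by positivity),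
      ENNReal.ofReal_add (by positivity) zero_le_one, ENNReal.ofReal_natCast,
      ENNReal.ofReal_pow (by norm_num)]
    simp
  rw [hconst, nsmul_eq_mul]
  calc (S.card : ENNReal) * (2 ^ m * (ENNReal.ofReal C * N * sobNorm m g))
      ≤ (S.card + 1) * (2 ^ m * (ENNReal.ofReal C * N * sobNorm m g)) := by
        gcongr
        exact le_self_add
    _ = (S.card + 1) * 2 ^ m * ENNReal.ofReal C * N * sobNorm m g := by ring
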